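/- Let q = 2^{20} and N = 75. For any primitive element γ of F_q, let C_i = γ^i⟨γ^{75}⟩ (0 ≤ i ≤ 74) be the cyclotomic classes of order 75 of F_q, and let D = C₀ ∪ C₃ ∪ C₆ ∪ C₉ ∪ C₁₂. Then the Cayley graph Cay(F_q, D) is a strongly regular graph. -/

import Mathlib

open scoped Classical

/-- The cyclotomic class `C_i = γ^i ⟨γ^N⟩ = {γ^{i+Nk} : k ∈ ℤ}` of order `N` of a finite
field, with respect to the primitive element `γ`. -/
def cycClass {F : Type*} [Field F] (γ : Fˣ) (N i : ℕ) : Set F :=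
  {x : F | ∃ k : ℤ, x = ((γ ^ ((i : ℤ) + (N : ℤ) * k) : Fˣ) : F)}

/-- The Cayley graph on the additive group `G` with connection set `D`. -/
def cayley {G : Type*} [AddGroup G] (D : Set G) : SimpleGraph G :=
  SimpleGraph.fromRel fun x y => x - y ∈ D

/-!
By Fourier inversion on the additive group, the graph is strongly regular as soon as the sums of the
nontrivial additive characters over `D` take two values. These sums are `∑ j < 5, W (m + 3 j)`,
where `W` denotes the Gaussian periods of order `75`, and the Gauss sums are the Fourier transform
of `W`. Frobenius makes `W` invariant under multiplication by `2`, whose powers exhaust the units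
modulo `3`, `5` and `25`, but form a subgroup of index `2`, not containing `-1`, in the units modulo
`15` and `75`. So the Gauss sums of orders `3`, `5` and `25` are integers, equal to `± 2 ^ 10` with
signs determined by congruences, while those of orders `15` and `75` lie in `ℚ(√-15)`. The latter
satisfy norm equations `u ^ 2 + 15 v ^ 2 = 2 ^ 22`; congruences modulo `15` and the divisibility by
powers of `2` coming from Jacobi sums leave only the solutions `u = 512`, `v = ± 512` for the order
`75`. Both signs give the same two values `273` and `-239`.
-/

section StronglyRegular

theorem exists_forall_eq_of_forall_eq {α β : Type*} [Nonempty β] {p : α → Prop} {f : α → β}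
    (h : ∀ a b, p a → p b → f a = f b) : ∃ c, ∀ a, p a → f a = c := by
  by_cases hp : ∃ a, p a
  · exact ⟨f hp.choose, fun a ha => h _ _ ha hp.choose_spec⟩
  · exact ⟨Classical.arbitrary β, fun a ha => absurd ⟨a, ha⟩ hp⟩

theorem cayley_adj_iff {G : Type*} [AddCommGroup G] {D : Finset G} (h0 : 0 ∉ D)
    (hneg : ∀ x ∈ D, -x ∈ D) {v w : G} : (cayley (D : Set G)).Adj v w ↔ v - w ∈ D := by
  have hsymm : w - v ∈ D ↔ v - w ∈ D :=
    ⟨fun h => neg_sub w v ▸ hneg _ h, fun h => neg_sub v w ▸ hneg _ h⟩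
  simp only [cayley, SimpleGraph.fromRel_adj, Finset.mem_coe, hsymm, or_self, and_iff_right_iff_imp]
  rintro h rfl
  exact h0 (sub_self v ▸ h)

variable {G : Type*} [AddCommGroup G] [Fintype G] {D : Finset G}

theorem card_commonNeighbors_cayley (h0 : 0 ∉ D) (hneg : ∀ x ∈ D, -x ∈ D) (v w : G) :
    Fintype.card ((cayley (D : Set G)).commonNeighbors v w) =
      (D.filter fun d => v - w - d ∈ D).card := by
  rw [Fintype.card_subtype]
  refine Finset.card_bij (fun x _ => v - x) ?_ ?_ ?_
  · intro x hx
    simp only [Finset.mem_filter_univ, SimpleGraph.mem_commonNeighbors,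
      cayley_adj_iff h0 hneg] at hx
    refine Finset.mem_filter.mpr ⟨hx.1, ?_⟩
    rw [show v - w - (v - x) = -(w - x) by abel]
    exact hneg _ hx.2
  · intro x _ y _ h
    exact sub_right_injective h
  · intro d hd
    obtain ⟨hd, hd'⟩ := Finset.mem_filter.mp hd
    refine ⟨v - d, ?_, sub_sub_cancel v d⟩
    simp only [Finset.mem_filter_univ, SimpleGraph.mem_commonNeighbors, cayley_adj_iff h0 hneg,
      sub_sub_cancel]
    refine ⟨hd, ?_⟩
    rw [show w - (v - d) = -(v - w - d) by abel]
    exact hneg _ hd'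

theorem degree_cayley (h0 : 0 ∉ D) (hneg : ∀ x ∈ D, -x ∈ D) (v : G) :
    (cayley (D : Set G)).degree v = D.card := by
  have h := card_commonNeighbors_cayley h0 hneg v v
  simp only [SimpleGraph.commonNeighbors, Set.inter_self, sub_self, zero_sub] at h
  rw [← SimpleGraph.card_neighborSet_eq_degree, h, Finset.filter_true_of_mem hneg]

theorem sum_sum_addChar_mul_addChar_neg (D : Finset G) (y : G) :
    ∑ ψ : AddChar G ℂ, (∑ d ∈ D, ψ d) * ψ (-y) = if y ∈ D then (Fintype.card G : ℂ) else 0 := by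
  calc ∑ ψ : AddChar G ℂ, (∑ d ∈ D, ψ d) * ψ (-y)
      = ∑ d ∈ D, ∑ ψ : AddChar G ℂ, ψ (d - y) := by
        simp only [Finset.sum_mul, sub_eq_add_neg, AddChar.map_add_eq_mul]
        exact Finset.sum_comm
    _ = _ := by simp [AddChar.sum_apply_eq_ite, sub_eq_zero]

theorem sum_sum_addChar_sq_mul_addChar_neg (D : Finset G) (y : G) :
    ∑ ψ : AddChar G ℂ, (∑ d ∈ D, ψ d) ^ 2 * ψ (-y) =
      Fintype.card G * (D.filter fun d => y - d ∈ D).card := by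
  calc ∑ ψ : AddChar G ℂ, (∑ d ∈ D, ψ d) ^ 2 * ψ (-y)
      = ∑ ψ : AddChar G ℂ, ∑ d ∈ D, (∑ d' ∈ D, ψ d') * ψ (-(y - d)) := by
        refine Finset.sum_congr rfl fun ψ _ => ?_
        have hψ (d : G) : ψ (-(y - d)) = ψ d * ψ (-y) := by
          rw [neg_sub, sub_eq_add_neg, AddChar.map_add_eq_mul]
        simp only [hψ, ← Finset.mul_sum, ← Finset.sum_mul, sq, mul_assoc]
    _ = ∑ d ∈ D, if y - d ∈ D then (Fintype.card G : ℂ) else 0 := by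
        rw [Finset.sum_comm]
        simp only [sum_sum_addChar_mul_addChar_neg]
    _ = _ := by rw [← Finset.sum_filter, Finset.sum_const, nsmul_eq_mul, mul_comm]

variable {r s : ℂ} (hD : ∀ ψ : AddChar G ℂ, ψ ≠ 1 → ∑ d ∈ D, ψ d = r ∨ ∑ d ∈ D, ψ d = s)
include hD

/- The sum `S` of a nontrivial character over `D` satisfies `S ^ 2 = (r + s) * S - r * s`; Fourier
inversion turns this into a relation between the self-convolution of `D` and its indicator. -/
theorem card_mul_card_filter_sub_mem {y : G} (hy : y ≠ 0) :
    (Fintype.card G * (D.filter fun d => y - d ∈ D).card : ℂ) =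
      (r + s) * (if y ∈ D then (Fintype.card G : ℂ) else 0) + (D.card - r) * (D.card - s) := by
  have hroot (ψ : AddChar G ℂ) : ((∑ d ∈ D, ψ d) - r) * ((∑ d ∈ D, ψ d) - s) * ψ (-y) =
      if ψ = 1 then ((D.card : ℂ) - r) * (D.card - s) else 0 := by
    split_ifs with hψ
    · simp [hψ]
    · rcases hD ψ hψ with h | h <;> simp [h]
  have hψ0 : ∑ ψ : AddChar G ℂ, ψ (-y) = 0 := by
    rw [AddChar.sum_apply_eq_zero_iff_ne_zero, neg_ne_zero]
    exact hy
  calc (Fintype.card G * (D.filter fun d => y - d ∈ D).card : ℂ)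
      = ∑ ψ : AddChar G ℂ, (∑ d ∈ D, ψ d) ^ 2 * ψ (-y) :=
        (sum_sum_addChar_sq_mul_addChar_neg D y).symm
    _ = (r + s) * ∑ ψ : AddChar G ℂ, (∑ d ∈ D, ψ d) * ψ (-y) +
          ∑ ψ : AddChar G ℂ, ((∑ d ∈ D, ψ d) - r) * ((∑ d ∈ D, ψ d) - s) * ψ (-y) -
          r * s * ∑ ψ : AddChar G ℂ, ψ (-y) := by
        simp only [Finset.mul_sum, ← Finset.sum_add_distrib, ← Finset.sum_sub_distrib]
        exact Finset.sum_congr rfl fun ψ _ => by ring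
    _ = _ := by
        simp only [sum_sum_addChar_mul_addChar_neg, hroot, hψ0, mul_zero, sub_zero,
          Finset.sum_ite_eq', Finset.mem_univ, if_true]

omit [Fintype G] in
theorem card_filter_sub_mem_eq [Finite G] {y z : G} (hy : y ≠ 0) (hz : z ≠ 0)
    (hyz : y ∈ D ↔ z ∈ D) :
    (D.filter fun d => y - d ∈ D).card = (D.filter fun d => z - d ∈ D).card := by
  have := Fintype.ofFinite G
  have hG : (Fintype.card G : ℂ) ≠ 0 := Nat.cast_ne_zero.mpr Fintype.card_ne_zero
  have h := card_mul_card_filter_sub_mem hD hy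
  simp only [hyz, ← card_mul_card_filter_sub_mem hD hz] at h
  exact_mod_cast mul_left_cancel₀ hG h

theorem exists_isSRGWith_cayley (h0 : 0 ∉ D) (hneg : ∀ x ∈ D, -x ∈ D) :
    ∃ k lam mu : ℕ, (cayley (D : Set G)).IsSRGWith (Fintype.card G) k lam mu := by
  have hD0 {y : G} (hy : y ∈ D) : y ≠ 0 := fun h => h0 (h ▸ hy)
  obtain ⟨lam, hlam⟩ : ∃ lam, ∀ y, y ∈ D → (D.filter fun d => y - d ∈ D).card = lam :=
    exists_forall_eq_of_forall_eq fun y z hy hz =>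
      card_filter_sub_mem_eq hD (hD0 hy) (hD0 hz) (iff_of_true hy hz)
  obtain ⟨mu, hmu⟩ : ∃ mu, ∀ y, y ≠ 0 ∧ y ∉ D → (D.filter fun d => y - d ∈ D).card = mu :=
    exists_forall_eq_of_forall_eq fun y z hy hz =>
      card_filter_sub_mem_eq hD hy.1 hz.1 (iff_of_false hy.2 hz.2)
  refine ⟨D.card, lam, mu, rfl, degree_cayley h0 hneg, fun v w h => ?_, fun v w hvw h => ?_⟩
  · rw [card_commonNeighbors_cayley h0 hneg, hlam _ ((cayley_adj_iff h0 hneg).mp h)]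
  · rw [card_commonNeighbors_cayley h0 hneg,
      hmu _ ⟨sub_ne_zero.mpr hvw, fun h' => h ((cayley_adj_iff h0 hneg).mpr h')⟩]

end StronglyRegular

section CharactersOfZMod

theorem addChar_inv_injective {A M : Type*} [AddCommGroup A] [DivisionCommMonoid M]
    {e : AddChar A M} (he : Function.Injective e) : Function.Injective (e⁻¹ : AddChar A M) :=
  fun i j h => neg_injective (he (by simpa only [AddChar.inv_apply] using h))

variable {N : ℕ}

theorem apply_natCast_mul_eq_pow {M : Type*} [Monoid M] (e : AddChar (ZMod N) M) (n : ℕ)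
    (i : ZMod N) : e (n * i) = e i ^ n := by
  rw [← nsmul_eq_mul, AddChar.map_nsmul_eq_pow]

theorem geom_sum_apply_eq_zero {K : Type*} [Field K] {e : AddChar (ZMod N) K}
    (he : Function.Injective e) {i : ZMod N} (hi : i ≠ 0) {n : ℕ} (hn : n * i = 0) :
    ∑ s ∈ Finset.range n, e i ^ s = 0 := by
  have hne : e i ≠ 1 := fun h => hi (he (h.trans e.map_zero_eq_one.symm))
  rw [geom_sum_eq hne, ← apply_natCast_mul_eq_pow, hn, AddChar.map_zero_eq_one, sub_self, zero_div]

end CharactersOfZMod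

section FourierSum

variable {N : ℕ}

/-- Functions on `ZMod N` that are constant on the orbits of multiplication by `2`, which are the
orbits of Frobenius on the values of a multiplicative character in characteristic `2`. -/
def DoublingInvariant {M : Type*} (W : ZMod N → M) : Prop :=
  ∀ i, W (2 * i) = W i

theorem DoublingInvariant.two_pow_mul {M : Type*} {W : ZMod N → M} (hW : DoublingInvariant W)
    (j : ℕ) (i : ZMod N) : W (2 ^ j * i) = W i := by
  induction j with
  | zero => rw [pow_zero, one_mul]
  | succ j ih => rw [pow_succ', mul_assoc, hW, ih]

theorem isUnit_two_of_odd (hN : Odd N) : IsUnit (2 : ZMod N) := by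
  exact_mod_cast (ZMod.isUnit_iff_coprime 2 N).mpr hN.coprime_two_left

variable [NeZero N] {K : Type*} [Field K]

/-- The Fourier transform at `k` of an integer-valued function on `ZMod N`, with respect to an
arbitrary character `e` in the role of `i ↦ exp (2πi / N)`. -/
def fourierSum (e : AddChar (ZMod N) K) (W : ZMod N → ℤ) (k : ZMod N) : K :=
  ∑ i, (W i : K) * e (k * i)

theorem fourierSum_inv (e : AddChar (ZMod N) K) (W : ZMod N → ℤ) (k : ZMod N) :
    fourierSum e⁻¹ W k = fourierSum e W (-k) := by
  simp only [fourierSum, AddChar.inv_apply, neg_mul]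

theorem sum_two_mul {M : Type*} [AddCommMonoid M] (hN : Odd N) (f : ZMod N → M) :
    ∑ i, f (2 * i) = ∑ i, f i := by
  obtain ⟨u, hu⟩ := isUnit_two_of_odd hN
  rw [← hu]
  exact Equiv.sum_comp u.mulLeft f

theorem DoublingInvariant.doublingInvariant_fourierSum {W : ZMod N → ℤ}
    (hW : DoublingInvariant W) (hN : Odd N) (e : AddChar (ZMod N) K) :
    DoublingInvariant (fourierSum e W) := by
  intro k
  calc fourierSum e W (2 * k) = ∑ i, (W (2 * i) : K) * e (k * (2 * i)) := by
        simp only [fourierSum, hW _, mul_left_comm k, mul_assoc]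
    _ = fourierSum e W k := sum_two_mul hN fun i => (W i : K) * e (k * i)

end FourierSum

section DoublingOrbits

/-- The least element of the orbit of `i` under multiplication by `2` modulo `75`, that is, the
leader of its `2`-cyclotomic coset; the order of `2` modulo `75` is `20`. -/
def cosetLeader (i : ZMod 75) : ℕ :=
  (Finset.range 20).inf' ⟨0, by decide⟩ fun j => 2 ^ j * i.val % 75

variable {M : Type*} {W : ZMod 75 → M}

theorem DoublingInvariant.apply_cosetLeader (hW : DoublingInvariant W) (i : ZMod 75) :
    W (cosetLeader i) = W i := by
  obtain ⟨j, -, hj⟩ := Finset.exists_mem_eq_inf' (⟨0, by decide⟩ : (Finset.range 20).Nonempty)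
    fun j => 2 ^ j * i.val % 75
  rw [cosetLeader, hj, ZMod.natCast_mod]
  push_cast
  rw [ZMod.natCast_zmod_val, hW.two_pow_mul]

variable [AddCommMonoid M]

theorem DoublingInvariant.sum_eq_sum_orbits (hW : DoublingInvariant W) :
    ∑ i, W i = W 0 + 20 • (W 1 + W 3 + W 7) + 4 • (W 5 + W 15 + W 35) + 2 • W 25 := by
  have himage : Finset.univ.image cosetLeader = {0, 1, 3, 5, 7, 15, 25, 35} := by decide +kernel
  have hcard : ∀ l ∈ ({0, 1, 3, 5, 7, 15, 25, 35} : Finset ℕ),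
      (Finset.univ.filter fun i => cosetLeader i = l).card =
        if l = 0 then 1 else if l = 25 then 2 else if 5 ∣ l then 4 else 20 := by decide +kernel
  calc ∑ i, W i = ∑ i, W (cosetLeader i) := by simp only [hW.apply_cosetLeader]
    _ = ∑ l ∈ ({0, 1, 3, 5, 7, 15, 25, 35} : Finset ℕ),
          (if l = 0 then 1 else if l = 25 then 2 else if 5 ∣ l then 4 else 20) • W l := by
        rw [Finset.sum_comp (fun l : ℕ => W l) cosetLeader, himage]
        exact Finset.sum_congr rfl fun l hl => by rw [hcard l hl]
    _ = _ := by
        norm_num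
        abel

theorem DoublingInvariant.sum_add_three_mul (hW : DoublingInvariant W) (m : ZMod 75) :
    ∑ j ∈ Finset.range 5, W (m + 3 * j) ∈
      ({W 0 + 4 • W 3, W 15 + 4 • W 3, 2 • W 1 + 2 • W 7 + W 5, 2 • W 1 + 2 • W 7 + W 25,
        2 • W 1 + 2 • W 7 + W 35} : Set M) := by
  have hleaders : ∀ m : ZMod 75,
      (Multiset.range 5).map (fun j => cosetLeader (m + 3 * j)) ∈
        ({{0, 3, 3, 3, 3}, {15, 3, 3, 3, 3}, {1, 1, 7, 7, 5}, {1, 1, 7, 7, 25},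
          {1, 1, 7, 7, 35}} : Finset (Multiset ℕ)) := by decide +kernel
  have hsum : ∑ j ∈ Finset.range 5, W (m + 3 * j) =
      (((Multiset.range 5).map fun j => cosetLeader (m + 3 * j)).map fun l : ℕ => W l).sum := by
    simp only [← hW.apply_cosetLeader (m + _), Multiset.map_map, Function.comp_apply]
    rfl
  have h := hleaders m
  simp only [Finset.mem_insert, Finset.mem_singleton] at h
  rw [hsum]
  rcases h with h | h | h | h | h <;> rw [h] <;> simp [succ_nsmul, add_assoc]

end DoublingOrbits

section PeriodsModSeventyFive

variable {K : Type*} [Field K] {e : AddChar (ZMod 75) K}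

/-- The sum of `e` over the twenty multiples `2 ^ j * i`, each point of the orbit of `i` being
counted with multiplicity. -/
def orbitTrace (e : AddChar (ZMod 75) K) (i : ZMod 75) : K :=
  ∑ j ∈ Finset.range 20, e (2 ^ j * i)

/-- The square root of `-15` generating the field of values of the periods of `e`: the product of
the quadratic Gauss sums of the restrictions of `e` to the subgroups of order `3` and `5`. -/
def sqrtNegFifteen (e : AddChar (ZMod 75) K) : K :=
  (e 50 - e 25) * (e 30 + e 45 - e 15 - e 60)

theorem sqrtNegFifteen_inv (e : AddChar (ZMod 75) K) :
    sqrtNegFifteen e⁻¹ = -sqrtNegFifteen e := by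
  have h25 : (-25 : ZMod 75) = 50 := by decide
  have h50 : (-50 : ZMod 75) = 25 := by decide
  have h30 : (-30 : ZMod 75) = 45 := by decide
  have h45 : (-45 : ZMod 75) = 30 := by decide
  have h15 : (-15 : ZMod 75) = 60 := by decide
  have h60 : (-60 : ZMod 75) = 15 := by decide
  simp only [sqrtNegFifteen, AddChar.inv_apply, h25, h50, h30, h45, h15, h60]
  ring

theorem sum_cubeRoots_eq_zero (he : Function.Injective e) : 1 + e 25 + e 50 = 0 := by
  have h := geom_sum_apply_eq_zero he (i := 25) (n := 3) (by decide) (by decide)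
  have h50 : e 50 = e 25 ^ 2 := apply_natCast_mul_eq_pow e 2 25
  simpa only [h50, Finset.sum_range_succ, Finset.sum_range_zero, zero_add, pow_zero,
    pow_one] using h

theorem sum_fifthRoots_eq_zero (he : Function.Injective e) :
    1 + e 15 + e 30 + e 45 + e 60 = 0 := by
  have h := geom_sum_apply_eq_zero he (i := 15) (n := 5) (by decide) (by decide)
  have h30 : e 30 = e 15 ^ 2 := apply_natCast_mul_eq_pow e 2 15
  have h45 : e 45 = e 15 ^ 3 := apply_natCast_mul_eq_pow e 3 15
  have h60 : e 60 = e 15 ^ 4 := apply_natCast_mul_eq_pow e 4 15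
  simpa only [h30, h45, h60, Finset.sum_range_succ, Finset.sum_range_zero, zero_add, pow_zero,
    pow_one] using h

theorem sqrtNegFifteen_sq (he : Function.Injective e) : sqrtNegFifteen e ^ 2 = -15 := by
  have h50 : e 50 = e 25 ^ 2 := apply_natCast_mul_eq_pow e 2 25
  have h30 : e 30 = e 15 ^ 2 := apply_natCast_mul_eq_pow e 2 15
  have h45 : e 45 = e 15 ^ 3 := apply_natCast_mul_eq_pow e 3 15
  have h60 : e 60 = e 15 ^ 4 := apply_natCast_mul_eq_pow e 4 15
  have h3 := sum_cubeRoots_eq_zero he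
  have h5 := sum_fifthRoots_eq_zero he
  have hsqrt3 : (e 50 - e 25) ^ 2 = -3 := by
    rw [h50] at h3 ⊢
    linear_combination (e 25 ^ 2 - 3 * e 25 + 3) * h3
  have hsqrt5 : (e 30 + e 45 - e 15 - e 60) ^ 2 = 5 := by
    rw [h30, h45, h60] at h5 ⊢
    linear_combination (e 15 ^ 4 - 3 * e 15 ^ 3 + e 15 ^ 2 + 5 * e 15 - 5) * h5
  rw [sqrtNegFifteen, mul_pow, hsqrt3, hsqrt5]
  norm_num

theorem doublingInvariant_orbitTrace (e : AddChar (ZMod 75) K) :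
    DoublingInvariant (orbitTrace e) := by
  intro i
  have h20 : (2 : ZMod 75) ^ 20 = 1 := by decide
  have h := Finset.sum_range_succ (fun j => e (2 ^ j * i)) 20
  rw [Finset.sum_range_succ', h20, pow_zero, add_left_inj] at h
  simpa only [orbitTrace, pow_succ, mul_assoc] using h

/- Splitting off the subgroup `{1 + 15 s}` from the powers of `2` modulo `75` leaves geometric sums
over its cosets. -/
theorem orbitTrace_eq_sum_sum (e : AddChar (ZMod 75) K) (i : ZMod 75) :
    orbitTrace e i =
      ∑ a ∈ Finset.range 4, e (2 ^ a * i) * ∑ s ∈ Finset.range 5, e (15 * (2 ^ a * i)) ^ s := by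
  have hpow : (Multiset.range 20).map (fun j => (2 : ZMod 75) ^ j) =
      ((Finset.range 4 ×ˢ Finset.range 5).val).map
        fun p => (2 ^ p.1 + p.2 * (15 * 2 ^ p.1) : ZMod 75) := by decide +kernel
  calc orbitTrace e i
      = (((Multiset.range 20).map fun j => (2 : ZMod 75) ^ j).map fun x => e (x * i)).sum := by
        rw [Multiset.map_map]
        rfl
    _ = ∑ p ∈ Finset.range 4 ×ˢ Finset.range 5, e ((2 ^ p.1 + p.2 * (15 * 2 ^ p.1)) * i) := by
        rw [hpow, Multiset.map_map]
        rfl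
    _ = _ := by
        simp only [Finset.sum_product, add_mul, AddChar.map_add_eq_mul, mul_assoc,
          apply_natCast_mul_eq_pow, Finset.mul_sum]

theorem orbitTrace_eq_zero (he : Function.Injective e) {i : ZMod 75} (hi : 15 * i ≠ 0) :
    orbitTrace e i = 0 := by
  rw [orbitTrace_eq_sum_sum]
  refine Finset.sum_eq_zero fun a _ => ?_
  have h2 : IsUnit ((2 : ZMod 75) ^ a) := (isUnit_two_of_odd (by decide)).pow a
  rw [geom_sum_apply_eq_zero he, mul_zero]
  · rw [mul_left_comm]
    exact (h2.mul_right_eq_zero).not.mpr hi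
  · rw [← mul_assoc]
    exact mul_eq_zero_of_left (by decide) _

theorem orbitTrace_of_fifteen_mul_eq_zero (e : AddChar (ZMod 75) K) {i : ZMod 75}
    (hi : 15 * i = 0) : orbitTrace e i = 5 * (e i + e (2 * i) + e (4 * i) + e (8 * i)) := by
  have h4 : (2 : ZMod 75) ^ 2 = 4 := by decide
  have h8 : (2 : ZMod 75) ^ 3 = 8 := by decide
  simp only [orbitTrace_eq_sum_sum, mul_left_comm (15 : ZMod 75), hi, mul_zero,
    AddChar.map_zero_eq_one, one_pow, Finset.sum_const, Finset.card_range, nsmul_one,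
    Nat.cast_ofNat, Finset.sum_range_succ, Finset.sum_range_zero, pow_zero, pow_one, one_mul,
    h4, h8]
  ring

theorem orbitTrace_zero (e : AddChar (ZMod 75) K) : orbitTrace e 0 = 20 := by
  simp [orbitTrace]

theorem orbitTrace_fifteen (he : Function.Injective e) : orbitTrace e 15 = -5 := by
  have htrace : orbitTrace e 15 = 5 * (e 15 + e 30 + e 60 + e 45) :=
    orbitTrace_of_fifteen_mul_eq_zero e (by decide)
  linear_combination htrace + 5 * sum_fifthRoots_eq_zero he

theorem orbitTrace_twentyFive (he : Function.Injective e) : orbitTrace e 25 = -10 := by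
  have htrace : orbitTrace e 25 = 5 * (e 25 + e 50 + e 25 + e 50) :=
    orbitTrace_of_fifteen_mul_eq_zero e (by decide)
  linear_combination htrace + 10 * sum_cubeRoots_eq_zero he

theorem two_mul_orbitTrace_five (he : Function.Injective e) :
    2 * orbitTrace e 5 = 5 * (1 + sqrtNegFifteen e) := by
  have hadd (i j : ZMod 75) : e (i + j) = e i * e j := AddChar.map_add_eq_mul e i j
  have htrace : orbitTrace e 5 =
      5 * (e (50 + 30) + e (25 + 60) + e (50 + 45) + e (25 + 15)) :=
    orbitTrace_of_fifteen_mul_eq_zero e (by decide)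
  rw [htrace, sqrtNegFifteen, hadd, hadd, hadd, hadd]
  linear_combination 5 * (e 15 + e 30 + e 45 + e 60) * sum_cubeRoots_eq_zero he -
    5 * sum_fifthRoots_eq_zero he

theorem two_mul_orbitTrace_thirtyFive (he : Function.Injective e) :
    2 * orbitTrace e 35 = 5 * (1 - sqrtNegFifteen e) := by
  have hadd (i j : ZMod 75) : e (i + j) = e i * e j := AddChar.map_add_eq_mul e i j
  have htrace : orbitTrace e 35 =
      5 * (e (50 + 60) + e (25 + 45) + e (50 + 15) + e (25 + 30)) :=
    orbitTrace_of_fifteen_mul_eq_zero e (by decide)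
  rw [htrace, sqrtNegFifteen, hadd, hadd, hadd, hadd]
  linear_combination 5 * (e 15 + e 30 + e 45 + e 60) * sum_cubeRoots_eq_zero he -
    5 * sum_fifthRoots_eq_zero he

variable {W : ZMod 75 → ℤ}

theorem DoublingInvariant.twenty_mul_fourierSum (hW : DoublingInvariant W) (k : ZMod 75) :
    20 * fourierSum e W k = ∑ i, (W i : K) * orbitTrace e (k * i) := by
  have hF (j : ℕ) : fourierSum e W (2 ^ j * k) = fourierSum e W k :=
    (hW.doublingInvariant_fourierSum (by decide) e).two_pow_mul j k
  calc 20 * fourierSum e W k = ∑ j ∈ Finset.range 20, fourierSum e W (2 ^ j * k) := by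
        simp only [hF, Finset.sum_const, Finset.card_range, nsmul_eq_mul, Nat.cast_ofNat]
    _ = ∑ i, (W i : K) * orbitTrace e (k * i) := by
        simp only [fourierSum, orbitTrace, Finset.mul_sum, mul_assoc]
        exact Finset.sum_comm

theorem DoublingInvariant.twenty_mul_fourierSum_eq (hW : DoublingInvariant W) (k : ZMod 75) :
    20 * fourierSum e W k = 20 * W 0 +
      20 * (W 1 * orbitTrace e k + W 3 * orbitTrace e (k * 3) + W 7 * orbitTrace e (k * 7)) +
      4 * (W 5 * orbitTrace e (k * 5) + W 15 * orbitTrace e (k * 15) +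
        W 35 * orbitTrace e (k * 35)) + 2 * (W 25 * orbitTrace e (k * 25)) := by
  have hWT : DoublingInvariant fun i => (W i : K) * orbitTrace e (k * i) := fun i => by
    simp only [hW i, mul_left_comm k 2, doublingInvariant_orbitTrace e (k * i)]
  rw [hW.twenty_mul_fourierSum, hWT.sum_eq_sum_orbits]
  simp only [nsmul_eq_mul, mul_zero, mul_one, orbitTrace_zero, Nat.cast_ofNat,
    mul_comm (W 0 : K)]

variable [CharZero K]

theorem DoublingInvariant.two_mul_fourierSum_one (hW : DoublingInvariant W)
    (he : Function.Injective e) :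
    2 * fourierSum e W 1 = (2 * W 0 + W 5 + W 35 - 2 * W 15 - 2 * W 25 : ℤ) +
      (W 5 - W 35 : ℤ) * sqrtNegFifteen e := by
  have h := hW.twenty_mul_fourierSum_eq (e := e) 1
  simp only [one_mul] at h
  rw [orbitTrace_eq_zero he (i := 1) (by decide), orbitTrace_eq_zero he (i := 3) (by decide),
    orbitTrace_eq_zero he (i := 7) (by decide), orbitTrace_fifteen he,
    orbitTrace_twentyFive he] at h
  push_cast
  linear_combination h / 10 + (W 5 / 5 : K) * two_mul_orbitTrace_five he +
    (W 35 / 5 : K) * two_mul_orbitTrace_thirtyFive he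

theorem DoublingInvariant.two_mul_fourierSum_five (hW : DoublingInvariant W)
    (he : Function.Injective e) :
    2 * fourierSum e W 5 =
      (2 * W 0 + 5 * W 1 + 5 * W 7 - 10 * W 3 - 4 * W 5 - 4 * W 35 + 8 * W 15 - 2 * W 25 : ℤ) +
      (5 * (W 1 - W 7) : ℤ) * sqrtNegFifteen e := by
  have h25 : orbitTrace e (5 * 25) = orbitTrace e 25 := doublingInvariant_orbitTrace e 25
  have h := hW.twenty_mul_fourierSum_eq (e := e) 5
  rw [show (5 * 3 : ZMod 75) = 15 by decide, show (5 * 7 : ZMod 75) = 35 by decide,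
    show (5 * 5 : ZMod 75) = 25 by decide, show (5 * 15 : ZMod 75) = 0 by decide,
    show (5 * 35 : ZMod 75) = 25 by decide, h25, orbitTrace_zero, orbitTrace_fifteen he,
    orbitTrace_twentyFive he] at h
  push_cast
  linear_combination h / 10 + (W 1 : K) * two_mul_orbitTrace_five he +
    (W 7 : K) * two_mul_orbitTrace_thirtyFive he

theorem DoublingInvariant.fourierSum_three (hW : DoublingInvariant W)
    (he : Function.Injective e) :
    fourierSum e W 3 = (W 0 - W 5 - W 35 - W 15 + 2 * W 25 : ℤ) := by
  have h15 : orbitTrace e (3 * 15) = orbitTrace e 15 :=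
    (doublingInvariant_orbitTrace e).two_pow_mul 3 15
  have h35 : orbitTrace e (3 * 35) = orbitTrace e 15 := doublingInvariant_orbitTrace e 15
  have h := hW.twenty_mul_fourierSum_eq (e := e) 3
  rw [orbitTrace_eq_zero he (i := 3) (by decide), orbitTrace_eq_zero he (i := 3 * 3) (by decide),
    orbitTrace_eq_zero he (i := 3 * 7) (by decide), show (3 * 5 : ZMod 75) = 15 by decide,
    show (3 * 25 : ZMod 75) = 0 by decide, h15, h35, orbitTrace_zero, orbitTrace_fifteen he] at h
  push_cast
  linear_combination h / 20

theorem DoublingInvariant.fourierSum_fifteen (hW : DoublingInvariant W)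
    (he : Function.Injective e) :
    fourierSum e W 15 =
      (W 0 - 5 * (W 1 + W 3 + W 7) + 4 * (W 5 + W 15 + W 35) + 2 * W 25 : ℤ) := by
  have h3 : orbitTrace e (15 * 3) = orbitTrace e 15 :=
    (doublingInvariant_orbitTrace e).two_pow_mul 3 15
  have h7 : orbitTrace e (15 * 7) = orbitTrace e 15 := doublingInvariant_orbitTrace e 15
  have h := hW.twenty_mul_fourierSum_eq (e := e) 15
  rw [show (15 * 5 : ZMod 75) = 0 by decide, show (15 * 15 : ZMod 75) = 0 by decide,
    show (15 * 35 : ZMod 75) = 0 by decide, show (15 * 25 : ZMod 75) = 0 by decide,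
    h3, h7, orbitTrace_zero, orbitTrace_fifteen he] at h
  push_cast
  linear_combination h / 20

theorem DoublingInvariant.fourierSum_twentyFive (hW : DoublingInvariant W)
    (he : Function.Injective e) :
    fourierSum e W 25 =
      (W 0 - 10 * W 1 - 10 * W 7 + 20 * W 3 - 2 * W 5 - 2 * W 35 + 4 * W 15 - W 25 : ℤ) := by
  have h5 : orbitTrace e (25 * 5) = orbitTrace e 25 := doublingInvariant_orbitTrace e 25
  have h35 : orbitTrace e (25 * 35) = orbitTrace e 25 := doublingInvariant_orbitTrace e 25
  have h := hW.twenty_mul_fourierSum_eq (e := e) 25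
  rw [show (25 * 3 : ZMod 75) = 0 by decide, show (25 * 7 : ZMod 75) = 25 by decide,
    show (25 * 15 : ZMod 75) = 0 by decide, show (25 * 25 : ZMod 75) = 25 by decide,
    h5, h35, orbitTrace_zero, orbitTrace_twentyFive he] at h
  push_cast
  linear_combination h / 20

end PeriodsModSeventyFive

section Arithmetic

theorem two_pow_succ_dvd_of_two_pow_dvd_sq {x : ℤ} {n : ℕ} (h : 2 ^ (2 * n + 1) ∣ x ^ 2) :
    2 ^ (n + 1) ∣ x := by
  have hx : (2 ^ n) ^ 2 ∣ x ^ 2 := by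
    rw [← pow_mul, mul_comm]
    exact (pow_dvd_pow 2 (Nat.le_succ _)).trans h
  obtain ⟨t, rfl⟩ := (Int.pow_dvd_pow_iff two_ne_zero).mp hx
  have ht : 2 ∣ t ^ 2 := by
    rw [mul_pow, ← pow_mul, mul_comm n 2, pow_succ] at h
    exact (mul_dvd_mul_iff_left (by positivity)).mp h
  exact mul_dvd_mul_left _ (Int.prime_two.dvd_of_dvd_pow ht)

theorem pow_dvd_or_pow_dvd_of_pow_dvd_mul {R : Type*} [CommMonoidWithZero R] [IsCancelMulZero R]
    {p a b : R} (hp : Prime p) {k l : ℕ} (h : p ^ (k + l + 1) ∣ a * b) :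
    p ^ (k + 1) ∣ a ∨ p ^ (l + 1) ∣ b := by
  simp only [pow_dvd_iff_le_emultiplicity, emultiplicity_mul hp] at h ⊢
  by_contra! hlt
  push_cast at hlt h
  have hle := h.trans
    (add_le_add (Order.le_of_lt_add_one hlt.1) (Order.le_of_lt_add_one hlt.2))
  exact absurd hle (not_le.mpr (by exact_mod_cast Nat.lt_succ_self (k + l)))

theorem not_two_pow_six_dvd {u w : ℤ} (h : u ^ 2 + 375 * w ^ 2 = 2 ^ 22) (hu : u % 15 = 2) :
    ¬ 2 ^ 6 ∣ u := by
  rintro ⟨x, rfl⟩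
  have hw : (2 ^ 6) ^ 2 ∣ w ^ 2 := by
    have hdvd : (2 ^ 6) ^ 2 ∣ 375 * w ^ 2 := ⟨2 ^ 10 - x ^ 2, by linear_combination h⟩
    exact IsCoprime.dvd_of_dvd_mul_left (by norm_num) hdvd
  obtain ⟨y, rfl⟩ := (Int.pow_dvd_pow_iff two_ne_zero).mp hw
  have hxy : x ^ 2 + 375 * y ^ 2 = 1024 := by linarith
  have hx : -32 ≤ x ∧ x ≤ 32 := abs_le.mp (abs_le_of_sq_le_sq (by nlinarith) (by norm_num))
  have hy : -1 ≤ y ∧ y ≤ 1 := by constructor <;> nlinarith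
  obtain ⟨hx, hx'⟩ := hx
  obtain ⟨hy, hy'⟩ := hy
  interval_cases y <;> interval_cases x <;> omega

theorem eq_of_sq_add_fifteen_mul_sq_eq {u v : ℤ} (h : u ^ 2 + 15 * v ^ 2 = 2 ^ 22)
    (hdvd : 2 ^ 16 ∣ u ^ 2 - 15 * v ^ 2) (hu : u % 15 = 2) :
    u = 512 ∧ (v = 512 ∨ v = -512) := by
  obtain ⟨c, hc⟩ := hdvd
  obtain ⟨x, rfl⟩ : 2 ^ 8 ∣ u :=
    two_pow_succ_dvd_of_two_pow_dvd_sq (n := 7) ⟨2 ^ 6 + c, by norm_num; linarith⟩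
  obtain ⟨y, rfl⟩ : 2 ^ 8 ∣ v := by
    have hdvd : 2 ^ 15 ∣ 15 * v ^ 2 := ⟨2 ^ 6 - c, by linarith⟩
    exact two_pow_succ_dvd_of_two_pow_dvd_sq (n := 7)
      (IsCoprime.dvd_of_dvd_mul_left (by norm_num) hdvd)
  have hxy : x ^ 2 + 15 * y ^ 2 = 64 := by linarith
  have hx : -8 ≤ x ∧ x ≤ 8 := abs_le.mp (abs_le_of_sq_le_sq (by nlinarith) (by norm_num))
  have hy : -2 ≤ y ∧ y ≤ 2 := abs_le.mp (abs_le_of_sq_le_sq (by nlinarith) (by norm_num))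
  obtain ⟨hx, hx'⟩ := hx
  obtain ⟨hy, hy'⟩ := hy
  interval_cases y <;> interval_cases x <;> omega

end Arithmetic

section IndexTwo

variable {K : Type*} [Field K] [CharZero K] {e : AddChar (ZMod 75) K}

theorem intCast_add_mul_sqrtNegFifteen_inj (he : Function.Injective e) {a b c d : ℤ}
    (h : (a + b * sqrtNegFifteen e : K) = c + d * sqrtNegFifteen e) : a = c ∧ b = d := by
  have hsq : ((a - c : ℤ) : K) ^ 2 = (-15 * (b - d) ^ 2 : ℤ) := by
    push_cast
    linear_combination (a - c - (b - d) * sqrtNegFifteen e : K) * h +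
      (b - d : K) ^ 2 * sqrtNegFifteen_sq he
  have hsq : (a - c) ^ 2 = -15 * (b - d) ^ 2 := by exact_mod_cast hsq
  have hbd : b - d = 0 := pow_eq_zero_iff two_ne_zero |>.mp (by nlinarith [sq_nonneg (a - c)])
  have hac : a - c = 0 := pow_eq_zero_iff two_ne_zero |>.mp (by rw [hsq, hbd]; rfl)
  exact ⟨sub_eq_zero.mp hac, sub_eq_zero.mp hbd⟩

theorem sq_add_fifteen_mul_sq_eq (he : Function.Injective e) {x y : K} {n u v : ℤ}
    (hx : 2 * x = u + v * sqrtNegFifteen e) (hy : 2 * y = u - v * sqrtNegFifteen e)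
    (hxy : x * y = n) : u ^ 2 + 15 * v ^ 2 = 4 * n := by
  have h : ((u ^ 2 + 15 * v ^ 2 : ℤ) : K) = (4 * n : ℤ) := by
    push_cast
    linear_combination 4 * hxy - 2 * y * hx - (u + v * sqrtNegFifteen e : K) * hy +
      (v : K) ^ 2 * sqrtNegFifteen_sq he
  exact_mod_cast h

theorem eq_or_eq_neg_of_mul_self_eq {n : ℤ} (h : (n * n : K) = 2 ^ 20) :
    n = 1024 ∨ n = -1024 := by
  have hn : n * n = 1024 * 1024 := by
    have h' : n * n = 2 ^ 20 := by exact_mod_cast h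
    exact h'.trans (by norm_num)
  exact mul_self_eq_mul_self_iff.mp hn

theorem mul_eq_two_pow_mul_of_sq_mul_add_eq (he : Function.Injective e) {x y z : K}
    {u₁ v₁ u₅ v₅ p q : ℤ} (hx : 2 * x = u₁ + v₁ * sqrtNegFifteen e)
    (hy : 2 * y = u₅ + v₅ * sqrtNegFifteen e) (hz : 2 * z = u₅ - v₅ * sqrtNegFifteen e)
    (h : 2 * (x ^ 2 * (y + z)) = 2 ^ 20 * (p + q * sqrtNegFifteen e)) :
    (u₁ ^ 2 - 15 * v₁ ^ 2) * u₅ = 2 ^ 21 * p := by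
  have hsq : (u₁ + v₁ * sqrtNegFifteen e : K) ^ 2 = 4 * x ^ 2 := by rw [← hx]; ring
  have hyz : y + z = u₅ := by linear_combination (hy + hz) / 2
  rw [hyz] at h
  refine (intCast_add_mul_sqrtNegFifteen_inj he (b := 2 * u₁ * v₁ * u₅) (d := 2 ^ 21 * q) ?_).1
  push_cast
  linear_combination 2 * h + (u₅ : K) * hsq - (v₁ ^ 2 * u₅ : K) * sqrtNegFifteen_sq he

variable {W : ZMod 75 → ℤ}

theorem DoublingInvariant.rational_fourierSums (hW : DoublingInvariant W)
    (he : Function.Injective e) (hsum : ∑ i, W i = -1)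
    (hnorm : ∀ k ≠ 0, fourierSum e W k * fourierSum e⁻¹ W k = 2 ^ 20) :
    W 0 - W 5 - W 35 - W 15 + 2 * W 25 = 1024 ∧
      W 0 - 5 * (W 1 + W 3 + W 7) + 4 * (W 5 + W 15 + W 35) + 2 * W 25 = 1024 ∧
      W 0 - 10 * W 1 - 10 * W 7 + 20 * W 3 - 2 * W 5 - 2 * W 35 + 4 * W 15 - W 25 = -1024 := by
  have he' := addChar_inv_injective he
  have h3 := hnorm 3 (by decide)
  have h15 := hnorm 15 (by decide)
  have h25 := hnorm 25 (by decide)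
  rw [hW.fourierSum_three he, hW.fourierSum_three he'] at h3
  rw [hW.fourierSum_fifteen he, hW.fourierSum_fifteen he'] at h15
  rw [hW.fourierSum_twentyFive he, hW.fourierSum_twentyFive he'] at h25
  have h3 := eq_or_eq_neg_of_mul_self_eq h3
  have h15 := eq_or_eq_neg_of_mul_self_eq h15
  have h25 := eq_or_eq_neg_of_mul_self_eq h25
  rw [hW.sum_eq_sum_orbits] at hsum
  simp only [nsmul_eq_mul, Nat.cast_ofNat] at hsum
  -- The signs are forced by the congruences of the three sums with `-1` modulo `5`, `5` and `3`.
  omega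

/- The form of `hJ` is the one supplied by Jacobi sums: `g₁² = J g₅` and `g₁² = J' ḡ₅` add up to
`g₁² (g₅ + ḡ₅) = 2 ^ 20 (J + J')`, and `2 J`, `2 J'` lie in `ℤ + ℤ √-15`. -/
theorem DoublingInvariant.quadratic_fourierSum (hW : DoublingInvariant W)
    (he : Function.Injective e) (hsum : ∑ i, W i = -1)
    (hnorm : ∀ k ≠ 0, fourierSum e W k * fourierSum e⁻¹ W k = 2 ^ 20)
    (hJ : ∃ p q : ℤ, 2 * (fourierSum e W 1 ^ 2 * (fourierSum e W 5 + fourierSum e⁻¹ W 5)) =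
      2 ^ 20 * (p + q * sqrtNegFifteen e)) :
    2 * W 0 + W 5 + W 35 - 2 * W 15 - 2 * W 25 = 512 ∧ (W 5 - W 35 = 512 ∨ W 5 - W 35 = -512) := by
  have he' := addChar_inv_injective he
  obtain ⟨p, q, hpq⟩ := hJ
  obtain ⟨h3, h15, h25⟩ := hW.rational_fourierSums he hsum hnorm
  have hone := hW.two_mul_fourierSum_one he
  have hone' := hW.two_mul_fourierSum_one he'
  have hfive := hW.two_mul_fourierSum_five he
  have hfive' := hW.two_mul_fourierSum_five he'
  rw [sqrtNegFifteen_inv, mul_neg, ← sub_eq_add_neg] at hone' hfive'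
  have hn1 := hnorm 1 (by decide)
  have hn5 := hnorm 5 (by decide)
  generalize hu₁ : 2 * W 0 + W 5 + W 35 - 2 * W 15 - 2 * W 25 = u₁ at hone hone' ⊢
  generalize W 5 - W 35 = v₁ at hone hone' ⊢
  generalize hu₅ : 2 * W 0 + 5 * W 1 + 5 * W 7 - 10 * W 3 - 4 * W 5 - 4 * W 35 + 8 * W 15 -
    2 * W 25 = u₅ at hfive hfive'
  have hnorm1 := sq_add_fifteen_mul_sq_eq he (n := 2 ^ 20) hone hone' (by exact_mod_cast hn1)
  have hnorm5 := sq_add_fifteen_mul_sq_eq he (n := 2 ^ 20) hfive hfive' (by exact_mod_cast hn5)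
  have hprod : (u₁ ^ 2 - 15 * v₁ ^ 2) * u₅ = 2 ^ 21 * p :=
    mul_eq_two_pow_mul_of_sq_mul_add_eq he hone hfive hfive' hpq
  have hu₅' : ¬ 2 ^ 6 ∣ u₅ :=
    not_two_pow_six_dvd (w := W 1 - W 7) (by linear_combination hnorm5) (by omega)
  have hdvd : 2 ^ 16 ∣ u₁ ^ 2 - 15 * v₁ ^ 2 :=
    (pow_dvd_or_pow_dvd_of_pow_dvd_mul (k := 15) (l := 5) Int.prime_two
      (Dvd.intro p hprod.symm)).resolve_right hu₅'
  exact eq_of_sq_add_fifteen_mul_sq_eq hnorm1 hdvd (by omega)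

theorem DoublingInvariant.sum_add_three_mul_eq (hW : DoublingInvariant W)
    (he : Function.Injective e) (hsum : ∑ i, W i = -1)
    (hnorm : ∀ k ≠ 0, fourierSum e W k * fourierSum e⁻¹ W k = 2 ^ 20)
    (hJ : ∃ p q : ℤ, 2 * (fourierSum e W 1 ^ 2 * (fourierSum e W 5 + fourierSum e⁻¹ W 5)) =
      2 ^ 20 * (p + q * sqrtNegFifteen e)) (m : ZMod 75) :
    ∑ j ∈ Finset.range 5, W (m + 3 * j) = 273 ∨ ∑ j ∈ Finset.range 5, W (m + 3 * j) = -239 := by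
  obtain ⟨h3, h15, h25⟩ := hW.rational_fourierSums he hsum hnorm
  have h1 := hW.quadratic_fourierSum he hsum hnorm hJ
  rw [hW.sum_eq_sum_orbits] at hsum
  have hm := hW.sum_add_three_mul m
  simp only [Set.mem_insert_iff, Set.mem_singleton_iff] at hm
  simp only [nsmul_eq_mul, Nat.cast_ofNat] at hsum hm
  omega

end IndexTwo

section FiberSum

variable {N : ℕ} {K X : Type*} [Field K] [Fintype X] {e : AddChar (ZMod N) K} {f : X → K}

/-- The sum of the weights `w` over the fibre of `f` above `e i`. For `f` a multiplicative and `w`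
an additive character these are Gaussian periods. -/
noncomputable def fiberSum (e : AddChar (ZMod N) K) (f : X → K) (w : X → ℤ) (i : ZMod N) : ℤ :=
  ∑ x with f x = e i, w x

theorem sum_intCast_mul_pow_eq_fourierSum [NeZero N] (he : Function.Injective e)
    (hf : ∀ x, f x ≠ 0 → ∃ i, f x = e i) (w : X → ℤ) {k : ℕ} (hk : k ≠ 0) :
    ∑ x, (w x : K) * f x ^ k = fourierSum e (fiberSum e f w) k := by
  have hterm (x : X) :
      (w x : K) * f x ^ k = ∑ i, if f x = e i then (w x : K) * e (k * i) else 0 := by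
    by_cases hx : f x = 0
    · have hne (i : ZMod N) : f x ≠ e i := hx ▸ (e.val_isUnit i).ne_zero.symm
      rw [Finset.sum_eq_zero fun i _ => if_neg (hne i), hx, zero_pow hk, mul_zero]
    · obtain ⟨j, hj⟩ := hf x hx
      simp only [hj, he.eq_iff, Finset.sum_ite_eq, Finset.mem_univ, if_true]
      rw [apply_natCast_mul_eq_pow]
  simp only [fourierSum, fiberSum, hterm, Int.cast_sum, Finset.sum_mul, Finset.sum_filter,
    Int.cast_ite, Int.cast_zero, ite_mul, zero_mul]
  exact Finset.sum_comm

theorem doublingInvariant_fiberSum (hN : Odd N) (he : Function.Injective e)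
    (hf : ∀ x, f x ≠ 0 → ∃ i, f x = e i) {w : X → ℤ} (σ : X ≃ X)
    (hfσ : ∀ x, f (σ x) = f x ^ 2) (hwσ : ∀ x, w (σ x) = w x) :
    DoublingInvariant (fiberSum e f w) := by
  intro i
  refine (Finset.sum_equiv σ (fun x => ?_) fun x _ => (hwσ x).symm).symm
  have hsq (j : ZMod N) : e (2 * j) = e j ^ 2 := by
    rw [two_mul, AddChar.map_add_eq_mul, sq]
  simp only [Finset.mem_filter_univ, hfσ]
  refine ⟨fun h => by rw [h, hsq], fun h => ?_⟩
  have hx : f x ≠ 0 := by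
    intro h0
    rw [h0, zero_pow two_ne_zero] at h
    exact (e.val_isUnit _).ne_zero h.symm
  obtain ⟨j, hj⟩ := hf x hx
  rw [hj, ← hsq] at h
  rw [hj, (isUnit_two_of_odd hN).mul_left_cancel (he h)]

end FiberSum

section AdditiveCharacters

variable {F : Type*} [Field F]

theorem addChar_inv_eq_self [CharP F 2] {M : Type*} [CommMonoid M] (ψ : AddChar F M) :
    ψ⁻¹ = ψ := by
  ext x
  rw [AddChar.inv_apply, CharTwo.neg_eq]

variable [Finite F]

theorem exists_addChar_eq_intCast_sq_invariant [CharP F 2] (K : Type*) [Field K] [CharZero K] :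
    ∃ (ψ : AddChar F K) (w : F → ℤ), ψ ≠ 1 ∧ (∀ x, ψ x = w x) ∧ ∀ x, w (x ^ 2) = w x := by
  have := Fintype.ofFinite F
  let _ := ZMod.algebra F 2
  let ε : AddChar (ZMod 2) K := AddChar.zmodChar 2 (show (-1 : K) ^ 2 = 1 by norm_num)
  refine ⟨ε.compAddMonoidHom (Algebra.trace (ZMod 2) F).toAddMonoidHom,
    fun x => (-1) ^ (Algebra.trace (ZMod 2) F x).val, ?_, fun x => ?_, fun x => ?_⟩
  · obtain ⟨x, hx⟩ := Algebra.trace_surjective (ZMod 2) F 1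
    refine AddChar.ne_one_iff.mpr ⟨x, ?_⟩
    change ε (Algebra.trace (ZMod 2) F x) ≠ 1
    rw [hx, AddChar.zmodChar_apply, ZMod.val_one, pow_one]
    norm_num
  · push_cast
    rfl
  · have h : Algebra.trace (ZMod 2) F (x ^ 2) = Algebra.trace (ZMod 2) F x :=
      Algebra.trace_eq_of_algEquiv (FiniteField.frobeniusAlgEquiv (ZMod 2) F 2) x
    simp only [h]

theorem exists_eq_mulShift {ψ : AddChar F ℂ} (hψ : ψ ≠ 1) (φ : AddChar F ℂ) :
    ∃ b, φ = ψ.mulShift b := by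
  have := Fintype.ofFinite F
  have hinj := AddChar.to_mulShift_inj_of_isPrimitive (AddChar.IsPrimitive.of_ne_one hψ)
  have hbij := (Fintype.bijective_iff_injective_and_card _).mpr ⟨hinj, AddChar.card_eq.symm⟩
  obtain ⟨b, hb⟩ := hbij.2 φ
  exact ⟨b, hb.symm⟩

end AdditiveCharacters

section MultiplicativeCharacters

variable {F : Type*} [Field F] {N : ℕ} {K : Type*} [Field K] {e : AddChar (ZMod N) K}
  {χ : MulChar F K} {γ : Fˣ}

theorem exists_mulChar_apply_eq [Fintype F] (hγ : ∀ x : Fˣ, x ∈ Subgroup.zpowers γ)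
    (hN : N ∣ Fintype.card F - 1) (e : AddChar (ZMod N) K) : ∃ χ : MulChar F K, χ γ = e 1 := by
  have hζ : (e.val_isUnit 1).unit ∈ rootsOfUnity (Fintype.card Fˣ) K := by
    rw [mem_rootsOfUnity, Units.ext_iff, Units.val_pow_eq_pow_val, IsUnit.unit_spec,
      ← AddChar.map_nsmul_eq_pow, nsmul_one, Fintype.card_units,
      (ZMod.natCast_eq_zero_iff _ _).mpr hN, AddChar.map_zero_eq_one, Units.val_one]
  exact ⟨MulChar.ofRootOfUnity hζ hγ, MulChar.ofRootOfUnity_spec hζ hγ⟩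

theorem mulChar_zpow_apply (hχ : χ γ = e 1) (n : ℤ) : χ ((γ ^ n : Fˣ) : F) = e n := by
  rw [← MulChar.coe_toUnitHom, map_zpow, Units.val_zpow_eq_zpow_val, MulChar.coe_toUnitHom, hχ,
    ← AddChar.map_zsmul_eq_zpow, zsmul_one]

theorem exists_apply_eq_of_ne_zero (hγ : ∀ x : Fˣ, x ∈ Subgroup.zpowers γ) (hχ : χ γ = e 1) {x : F}
    (hx : x ≠ 0) : ∃ i, χ x = e i := by
  obtain ⟨n, hn⟩ := hγ (Units.mk0 x hx)
  refine ⟨n, ?_⟩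
  rw [← mulChar_zpow_apply hχ, show γ ^ n = Units.mk0 x hx from hn, Units.val_mk0]

theorem exists_apply_eq_of_apply_ne_zero (hγ : ∀ x : Fˣ, x ∈ Subgroup.zpowers γ)
    (hχ : χ γ = e 1) (x : F) (hx : χ x ≠ 0) : ∃ i, χ x = e i :=
  exists_apply_eq_of_ne_zero hγ hχ fun h => hx (h ▸ χ.map_zero)

theorem mem_cycClass_iff (hγ : ∀ x : Fˣ, x ∈ Subgroup.zpowers γ) (he : Function.Injective e)
    (hχ : χ γ = e 1) {i : ℕ} {x : F} : x ∈ cycClass γ N i ↔ χ x = e i := by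
  constructor
  · rintro ⟨k, rfl⟩
    rw [mulChar_zpow_apply hχ]
    push_cast
    rw [ZMod.natCast_self, zero_mul, add_zero]
  · intro h
    have hx : x ≠ 0 := by
      rintro rfl
      exact (e.val_isUnit i).ne_zero (h ▸ χ.map_zero)
    obtain ⟨n, hn⟩ := hγ (Units.mk0 x hx)
    have hn : γ ^ n = Units.mk0 x hx := hn
    have hin : ((i : ℤ) : ZMod N) = (n : ℤ) := by
      refine he ?_
      rw [← mulChar_zpow_apply hχ, ← mulChar_zpow_apply hχ, hn, Units.val_mk0, h,
        mulChar_zpow_apply hχ, Int.cast_natCast]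
    obtain ⟨k, hk⟩ := (ZMod.intCast_eq_intCast_iff_dvd_sub _ _ _).mp hin
    refine ⟨k, ?_⟩
    rw [← hk, add_sub_cancel, hn, Units.val_mk0]

theorem mulChar_pow_eq_one_iff (hγ : ∀ x : Fˣ, x ∈ Subgroup.zpowers γ) (he : Function.Injective e)
    (hχ : χ γ = e 1) {k : ℕ} : χ ^ k = 1 ↔ (k : ZMod N) = 0 := by
  constructor
  · intro h
    have h1 : (χ ^ k) γ = 1 := by rw [h, MulChar.one_apply_coe]
    rw [MulChar.pow_apply_coe, hχ, ← apply_natCast_mul_eq_pow, mul_one,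
      ← AddChar.map_zero_eq_one e] at h1
    exact he h1
  · intro h
    ext x
    obtain ⟨i, hi⟩ := exists_apply_eq_of_ne_zero hγ hχ x.ne_zero
    rw [MulChar.pow_apply_coe, hi, ← apply_natCast_mul_eq_pow, h, zero_mul, AddChar.map_zero_eq_one,
      MulChar.one_apply_coe]

theorem sum_apply_mul_eq_fiberSum [Fintype F] {w : F → ℤ} {ψ : AddChar F K}
    (hw : ∀ x, ψ x = w x) {b : F} {m : ZMod N} (hb : χ b = e m) (i : ZMod N) :
    ∑ x with χ x = e i, ψ (b * x) = fiberSum e χ w (m + i) := by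
  have hχb : χ b ≠ 0 := hb ▸ (e.val_isUnit m).ne_zero
  have hb0 : b ≠ 0 := fun h => hχb (h ▸ χ.map_zero)
  rw [fiberSum, Int.cast_sum]
  refine Finset.sum_equiv (Equiv.mulLeft₀ b hb0) (fun x => ?_) fun x _ => hw _
  rw [Finset.mem_filter_univ, Finset.mem_filter_univ, Equiv.mulLeft₀_apply, map_mul, hb,
    AddChar.map_add_eq_mul]
  exact (mul_right_injective₀ (hb ▸ hχb)).eq_iff.symm

end MultiplicativeCharacters

section GaussJacobi

variable {F : Type*} [Field F] [Fintype F] {N : ℕ} {K : Type*} [Field K]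
  {e : AddChar (ZMod N) K} {χ : MulChar F K} {γ : Fˣ} {ψ : AddChar F K} {w : F → ℤ}

theorem doublingInvariant_fiberSum_mulChar [CharP F 2] (hN : Odd N) (he : Function.Injective e)
    (hγ : ∀ x : Fˣ, x ∈ Subgroup.zpowers γ) (hχ : χ γ = e 1) (hwsq : ∀ x, w (x ^ 2) = w x) :
    DoublingInvariant (fiberSum e χ w) :=
  doublingInvariant_fiberSum hN he (exists_apply_eq_of_apply_ne_zero hγ hχ)
    (frobeniusEquiv F 2).toEquiv (fun x => map_pow χ x 2) hwsq

theorem gaussSum_pow_eq_fourierSum [NeZero N] (he : Function.Injective e)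
    (hγ : ∀ x : Fˣ, x ∈ Subgroup.zpowers γ) (hχ : χ γ = e 1) (hw : ∀ x, ψ x = w x) {k : ℕ}
    (hk : k ≠ 0) : gaussSum (χ ^ k) ψ = fourierSum e (fiberSum e χ w) k := by
  rw [← sum_intCast_mul_pow_eq_fourierSum he (exists_apply_eq_of_apply_ne_zero hγ hχ) w hk]
  exact Finset.sum_congr rfl fun x _ => by rw [MulChar.pow_apply' χ hk, hw, mul_comm]

theorem sum_fiberSum_mulChar [NeZero N] [CharZero K] (he : Function.Injective e)
    (hγ : ∀ x : Fˣ, x ∈ Subgroup.zpowers γ) (hχ : χ γ = e 1) (hψ : ψ ≠ 1)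
    (hw : ∀ x, ψ x = w x) : ∑ i, fiberSum e χ w i = -1 := by
  have hχN : χ ^ N = 1 := (mulChar_pow_eq_one_iff hγ he hχ).mpr (ZMod.natCast_self N)
  have h := gaussSum_pow_eq_fourierSum he hγ hχ hw (NeZero.ne N)
  rw [hχN, gaussSum_one_left hψ, ZMod.natCast_self] at h
  simp only [fourierSum, zero_mul, AddChar.map_zero_eq_one, mul_one] at h
  exact_mod_cast h.symm

theorem fourierSum_mul_fourierSum_inv [NeZero N] [CharP F 2] (he : Function.Injective e)
    (hγ : ∀ x : Fˣ, x ∈ Subgroup.zpowers γ) (hχ : χ γ = e 1) (hψ : ψ ≠ 1)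
    (hw : ∀ x, ψ x = w x) {k : ZMod N} (hk : k ≠ 0) :
    fourierSum e (fiberSum e χ w) k * fourierSum e⁻¹ (fiberSum e χ w) k = Fintype.card F := by
  have hval {i : ZMod N} (hi : i ≠ 0) :
      gaussSum (χ ^ i.val) ψ = fourierSum e (fiberSum e χ w) i := by
    rw [gaussSum_pow_eq_fourierSum he hγ hχ hw ((ZMod.val_ne_zero i).mpr hi),
      ZMod.natCast_zmod_val]
  have hne : χ ^ k.val ≠ 1 := by
    rwa [Ne, mulChar_pow_eq_one_iff hγ he hχ, ZMod.natCast_zmod_val]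
  have hinv : (χ ^ k.val)⁻¹ = χ ^ (-k).val := by
    rw [inv_eq_iff_mul_eq_one, ← pow_add, mulChar_pow_eq_one_iff hγ he hχ, Nat.cast_add,
      ZMod.natCast_zmod_val, ZMod.natCast_zmod_val, add_neg_cancel]
  rw [fourierSum_inv, ← hval hk, ← hval (neg_ne_zero.mpr hk), ← hinv]
  nth_rewrite 2 [← addChar_inv_eq_self ψ]
  exact gaussSum_mul_gaussSum_eq_card hne (AddChar.IsPrimitive.of_ne_one hψ)

theorem fourierSum_one_sq_eq [NeZero N] [CharP F 2] (hN : Odd N) (he : Function.Injective e)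
    (hγ : ∀ x : Fˣ, x ∈ Subgroup.zpowers γ) (hχ : χ γ = e 1) (hw : ∀ x, ψ x = w x)
    (hwsq : ∀ x, w (x ^ 2) = w x) {j : ℕ} (hj : (1 + 2 ^ j : ZMod N) ≠ 0) :
    fourierSum e (fiberSum e χ w) 1 ^ 2 =
      fourierSum e (fiberSum e χ w) (1 + 2 ^ j) * jacobiSum χ (χ ^ 2 ^ j) := by
  have hW := (doublingInvariant_fiberSum_mulChar hN he hγ hχ hwsq).doublingInvariant_fourierSum hN e
  have hpow {k : ℕ} (hk : k ≠ 0) := gaussSum_pow_eq_fourierSum he hγ hχ hw hk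
  have hcast : ((1 + 2 ^ j : ℕ) : ZMod N) = 1 + 2 ^ j := by push_cast; rfl
  have hmul : χ * χ ^ 2 ^ j = χ ^ (1 + 2 ^ j) := by rw [pow_add, pow_one]
  have hne : χ * χ ^ 2 ^ j ≠ 1 := by
    rwa [hmul, Ne, mulChar_pow_eq_one_iff hγ he hχ, hcast]
  have hone : gaussSum χ ψ = fourierSum e (fiberSum e χ w) 1 := by
    simpa only [pow_one, Nat.cast_one] using hpow one_ne_zero
  have htwo : gaussSum (χ ^ 2 ^ j) ψ = fourierSum e (fiberSum e χ w) 1 := by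
    rw [hpow (by positivity), Nat.cast_pow, Nat.cast_ofNat, ← mul_one (2 ^ j), hW.two_pow_mul]
  have hjacobi := jacobiSum_mul_nontrivial hne ψ
  rw [hmul, hpow (by positivity), hcast, hone, htwo, ← sq] at hjacobi
  exact hjacobi.symm

end GaussJacobi

section GaussJacobiSeventyFive

variable {F : Type*} [Field F] [Fintype F] [CharP F 2] {K : Type*} [Field K] [CharZero K]
  {e : AddChar (ZMod 75) K} {χ : MulChar F K} {γ : Fˣ} {ψ : AddChar F K} {w : F → ℤ}

theorem exists_two_mul_jacobiSum_pow_eq (he : Function.Injective e)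
    (hγ : ∀ x : Fˣ, x ∈ Subgroup.zpowers γ) (hχ : χ γ = e 1) {m : ℕ} (hm : m ≠ 0) :
    ∃ p q : ℤ, 2 * jacobiSum χ (χ ^ m) = p + q * sqrtNegFifteen e := by
  set f : F → K := fun x => χ x * χ (1 - x) ^ m
  have hf (x : F) (hx : f x ≠ 0) : ∃ i, f x = e i := by
    obtain ⟨i, hi⟩ := exists_apply_eq_of_apply_ne_zero hγ hχ x (left_ne_zero_of_mul hx)
    obtain ⟨j, hj⟩ := exists_apply_eq_of_apply_ne_zero hγ hχ (1 - x)
      (ne_zero_pow hm (right_ne_zero_of_mul hx))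
    refine ⟨i + m * j, ?_⟩
    rw [AddChar.map_add_eq_mul, apply_natCast_mul_eq_pow, ← hi, ← hj]
  have hfsq (x : F) : f (x ^ 2) = f x ^ 2 := by
    have h : 1 - x ^ 2 = (1 - x) ^ 2 := by rw [sub_pow_char, one_pow]
    simp only [f, h, map_pow]
    ring
  have hJ : jacobiSum χ (χ ^ m) = fourierSum e (fiberSum e f 1) 1 := by
    have h := sum_intCast_mul_pow_eq_fourierSum he hf 1 one_ne_zero
    rw [Nat.cast_one] at h
    rw [← h]
    refine Finset.sum_congr rfl fun x _ => ?_
    rw [Pi.one_apply, Int.cast_one, one_mul, pow_one, MulChar.pow_apply' χ hm]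
  have hW : DoublingInvariant (fiberSum e f 1) :=
    doublingInvariant_fiberSum (by decide) he hf (frobeniusEquiv F 2).toEquiv hfsq fun _ => rfl
  exact ⟨_, _, hJ ▸ hW.two_mul_fourierSum_one he⟩

theorem exists_fourierSum_one_sq_mul_eq (he : Function.Injective e)
    (hγ : ∀ x : Fˣ, x ∈ Subgroup.zpowers γ) (hχ : χ γ = e 1) (hw : ∀ x, ψ x = w x)
    (hwsq : ∀ x, w (x ^ 2) = w x) (hψ : ψ ≠ 1) :
    ∃ p q : ℤ, 2 * (fourierSum e (fiberSum e χ w) 1 ^ 2 *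
        (fourierSum e (fiberSum e χ w) 5 + fourierSum e⁻¹ (fiberSum e χ w) 5)) =
      Fintype.card F * (p + q * sqrtNegFifteen e) := by
  have hW := (doublingInvariant_fiberSum_mulChar (by decide) he hγ hχ
    hwsq).doublingInvariant_fourierSum (by decide) e
  have hnorm := fourierSum_mul_fourierSum_inv he hγ hχ hψ hw (k := 5) (by decide)
  have h₂ := fourierSum_one_sq_eq (by decide) he hγ hχ hw hwsq (j := 2) (by decide)
  have h₆ := fourierSum_one_sq_eq (by decide) he hγ hχ hw hwsq (j := 6) (by decide)
  rw [show (1 + 2 ^ 2 : ZMod 75) = 5 by decide] at h₂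
  rw [show (1 + 2 ^ 6 : ZMod 75) = 2 * -5 by decide, hW, ← fourierSum_inv] at h₆
  obtain ⟨p, q, hpq⟩ := exists_two_mul_jacobiSum_pow_eq he hγ hχ (m := 2 ^ 2) (by decide)
  obtain ⟨p', q', hpq'⟩ := exists_two_mul_jacobiSum_pow_eq he hγ hχ (m := 2 ^ 6) (by decide)
  refine ⟨p + p', q + q', ?_⟩
  push_cast
  linear_combination 2 * fourierSum e⁻¹ (fiberSum e χ w) 5 * h₂ +
    2 * fourierSum e (fiberSum e χ w) 5 * h₆ +
    2 * (jacobiSum χ (χ ^ 2 ^ 2) + jacobiSum χ (χ ^ 2 ^ 6)) * hnorm +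
    (Fintype.card F : K) * (hpq + hpq')

end GaussJacobiSeventyFive

section OrderSeventyFive

variable {F : Type*} [Field F] [Fintype F] {e : AddChar (ZMod 75) ℂ} {χ : MulChar F ℂ} {γ : Fˣ}

theorem sum_biUnion_addChar_eq_or_eq (hF : Fintype.card F = 2 ^ 20) (he : Function.Injective e)
    (hγ : ∀ x : Fˣ, x ∈ Subgroup.zpowers γ) (hχ : χ γ = e 1) {φ : AddChar F ℂ} (hφ : φ ≠ 1) :
    ∑ j ∈ Finset.range 5, ∑ x with χ x = e (3 * j), φ x = 273 ∨
      ∑ j ∈ Finset.range 5, ∑ x with χ x = e (3 * j), φ x = -239 := by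
  have : CharP F 2 := charP_of_card_eq_prime_pow hF
  obtain ⟨ψ, w, hψ, hw, hwsq⟩ := exists_addChar_eq_intCast_sq_invariant (F := F) ℂ
  obtain ⟨b, rfl⟩ := exists_eq_mulShift hψ φ
  have hb : b ≠ 0 := fun h => hφ (by rw [h, AddChar.mulShift_zero])
  obtain ⟨m, hm⟩ := exists_apply_eq_of_ne_zero hγ hχ hb
  have hcard : (Fintype.card F : ℂ) = 2 ^ 20 := by exact_mod_cast hF
  have hW := doublingInvariant_fiberSum_mulChar (by decide) he hγ hχ hwsq
  have hsum := sum_fiberSum_mulChar he hγ hχ hψ hw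
  have hnorm (k : ZMod 75) (hk : k ≠ 0) :=
    (fourierSum_mul_fourierSum_inv he hγ hχ hψ hw hk).trans hcard
  have hJ := exists_fourierSum_one_sq_mul_eq he hγ hχ hw hwsq hψ
  rw [hcard] at hJ
  simp only [AddChar.mulShift_apply, sum_apply_mul_eq_fiberSum hw hm]
  exact_mod_cast hW.sum_add_three_mul_eq he hsum hnorm hJ m

theorem pairwiseDisjoint_filter_apply_eq (he : Function.Injective e) :
    Set.PairwiseDisjoint (Finset.range 5 : Set ℕ)
      fun j : ℕ => ({x | χ x = e (3 * j)} : Finset F) := by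
  have hinj : ∀ i ∈ Finset.range 5, ∀ j ∈ Finset.range 5, (3 * i : ZMod 75) = 3 * j → i = j := by
    decide
  intro i hi j hj hij
  refine Finset.disjoint_left.mpr fun x hxi hxj => hij (hinj i hi j hj (he ?_))
  rw [Finset.mem_filter_univ] at hxi hxj
  exact hxi.symm.trans hxj

theorem union_cycClass_eq_coe_biUnion (he : Function.Injective e)
    (hγ : ∀ x : Fˣ, x ∈ Subgroup.zpowers γ) (hχ : χ γ = e 1) :
    cycClass γ 75 0 ∪ cycClass γ 75 3 ∪ cycClass γ 75 6 ∪ cycClass γ 75 9 ∪ cycClass γ 75 12 =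
      ((Finset.range 5).biUnion fun j => {x | χ x = e (3 * j)} : Finset F) := by
  have hmul (j : ℕ) : (3 * j : ZMod 75) = (3 * j : ℕ) := by push_cast; rfl
  have hrange : (Finset.range 5 : Set ℕ) = {0, 1, 2, 3, 4} := by
    ext j
    simp only [Finset.coe_range, Set.mem_Iio, Set.mem_insert_iff, Set.mem_singleton_iff]
    omega
  ext x
  simp only [hmul, ← mem_cycClass_iff hγ he hχ, Finset.coe_biUnion, hrange, Finset.coe_filter_univ,
    Set.ofPred_mem_eq, Set.biUnion_insert, Set.biUnion_singleton, Set.union_assoc]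

end OrderSeventyFive

/-- Ikuta–Munemasa's example: `q = 2²⁰`, `N = 75`,
`D = C₀ ∪ C₃ ∪ C₆ ∪ C₉ ∪ C₁₂` gives a strongly regular Cayley graph. -/
theorem statement_19 (F : Type*) [Field F] [Fintype F] (hcard : Fintype.card F = 2 ^ 20)
    (γ : Fˣ) (hγ : ∀ x : Fˣ, x ∈ Subgroup.zpowers γ)
    (D : Set F)
    (hD : D = cycClass γ 75 0 ∪ cycClass γ 75 3 ∪ cycClass γ 75 6 ∪ cycClass γ 75 9 ∪
      cycClass γ 75 12) :
    ∃ k lam mu : ℕ, (cayley D).IsSRGWith (Fintype.card F) k lam mu := by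
  have he : Function.Injective (ZMod.stdAddChar (N := 75)) := ZMod.injective_stdAddChar
  obtain ⟨χ, hχ⟩ := exists_mulChar_apply_eq hγ (by rw [hcard]; norm_num) (ZMod.stdAddChar (N := 75))
  have : CharP F 2 := charP_of_card_eq_prime_pow hcard
  rw [hD, union_cycClass_eq_coe_biUnion he hγ hχ]
  refine exists_isSRGWith_cayley (r := 273) (s := -239) (fun φ hφ => ?_) ?_ fun x hx => ?_
  · rw [Finset.sum_biUnion (pairwiseDisjoint_filter_apply_eq he)]
    exact sum_biUnion_addChar_eq_or_eq hcard he hγ hχ hφ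
  · simp [χ.map_zero, (AddChar.val_isUnit _ _).ne_zero.symm]
  · rwa [CharTwo.neg_eq]
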